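/- Let 𝐏 be a finite collection of quartiles and for each P ∈ 𝐏 and j = 1,2,3 let a^{(j)}_{P_j} be a complex number. Then for any 0 ≤ θ_1, θ_2, θ_3 < 1 with θ_1 + θ_2 + θ_3 = 1, |Σ_{P∈𝐏} |I_P|^{−1/2} a^{(1)}_{P_1} a^{(2)}_{P_2} a^{(3)}_{P_3}| ≲ Π_{j=1}^3 size_j((a^{(j)}_{P_j})_{P∈𝐏})^{θ_j} · energy_j((a^{(j)}_{P_j})_{P∈𝐏})^{1−θ_j}, with implicit constant depending only on θ_1, θ_2, θ_3. -/

import Mathlib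

open MeasureTheory Set

/-- The Walsh functions `w_l : ℝ → ℝ`, defined recursively by
`w_0 = χ_{[0,1)}`, `w_{2l}(x) = w_l(2x) + w_l(2x−1)`,
`w_{2l+1}(x) = w_l(2x) − w_l(2x−1)`. -/
noncomputable def walsh : ℕ → ℝ → ℝ
  | 0, x => if x ∈ Set.Ico (0:ℝ) 1 then 1 else 0
  | (n+1), x =>
      if (n+1) % 2 = 0 then walsh ((n+1)/2) (2*x) + walsh ((n+1)/2) (2*x - 1)
      else walsh ((n+1)/2) (2*x) - walsh ((n+1)/2) (2*x - 1)
  decreasing_by all_goals exact Nat.div_lt_self (Nat.succ_pos n) one_lt_two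

/-- A tile `[2^{-k}n, 2^{-k}(n+1)) × [2^k l, 2^k(l+1))`:
a half-open dyadic rectangle of area one. -/
structure Tile where
  k : ℤ
  n : ℤ
  l : ℤ
deriving DecidableEq

namespace Tile

/-- The time interval `I_P = [2^{-k}n, 2^{-k}(n+1))` of a tile. -/
noncomputable def I (p : Tile) : Set ℝ := Set.Ico ((2:ℝ)^(-p.k) * p.n) ((2:ℝ)^(-p.k) * (p.n+1))

/-- The frequency interval `ω_P = [2^k l, 2^k(l+1))` of a tile. -/
noncomputable def freq (p : Tile) : Set ℝ := Set.Ico ((2:ℝ)^(p.k) * p.l) ((2:ℝ)^(p.k) * (p.l+1))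

/-- The tile as a subset `I_P × ω_P` of the time-frequency plane. -/
noncomputable def area (p : Tile) : Set (ℝ × ℝ) := p.I ×ˢ p.freq

/-- The length `|I_P| = 2^{-k}` of the time interval of a tile. -/
noncomputable def len (p : Tile) : ℝ := (2:ℝ)^(-p.k)

/-- The center `ξ_P` of the frequency interval of a tile. -/
noncomputable def ξ (p : Tile) : ℝ := (2:ℝ)^(p.k) * ((p.l : ℝ) + 1/2)

/-- The tile order: `p < q` iff `I_p ⊊ I_q` and `ω_q ⊆ ω_p`. -/
def lt (p q : Tile) : Prop := p.I ⊂ q.I ∧ q.freq ⊆ p.freq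

/-- `p ≤ q` iff `p < q` or `p = q`. -/
def le (p q : Tile) : Prop := Tile.lt p q ∨ p = q

/-- The Walsh wave packet `φ_P(x) = 2^{k/2} w_l(2^k x − n)` of a tile. -/
noncomputable def wp (p : Tile) : ℝ → ℝ :=
  fun x => Real.sqrt ((2:ℝ)^(p.k)) * walsh p.l.toNat ((2:ℝ)^(p.k) * x - p.n)

end Tile

/-- A quartile `[2^{-k}n, 2^{-k}(n+1)) × [2^{k+2}l, 2^{k+2}(l+1))`:
a dyadic rectangle of area four. -/
structure Quartile where
  k : ℤ
  n : ℤ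
  l : ℤ
deriving DecidableEq

namespace Quartile

/-- The time interval `I_P` of a quartile. -/
noncomputable def I (P : Quartile) : Set ℝ := Set.Ico ((2:ℝ)^(-P.k) * P.n) ((2:ℝ)^(-P.k) * (P.n+1))

/-- The length `|I_P| = 2^{-k}` of the time interval of a quartile. -/
noncomputable def len (P : Quartile) : ℝ := (2:ℝ)^(-P.k)

/-- The `j`-th sub-tile `P_j = I_P × [2^k(4l+j−1), 2^k(4l+j))` of a quartile,
for `j = 1, 2, 3`. -/
def tile (P : Quartile) (j : ℕ) : Tile := ⟨P.k, P.n, 4*P.l + ((j - 1 : ℕ) : ℤ)⟩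

end Quartile

/-- `T` is an `i`-tree with top `top`: `P_i ≤ top_i` for all `P ∈ T`. -/
def IsTree (i : ℕ) (top : Quartile) (T : Finset Quartile) : Prop :=
  ∀ P ∈ T, Tile.le (P.tile i) (top.tile i)

/-- `size_j((a_P)_{P∈Ps})`: the sup over trees `T ⊆ Ps` which are `i`-trees for
some `i ≠ j` of `(|I_T|⁻¹ Σ_{P∈T} |a_{P_j}|²)^{1/2}`. -/
noncomputable def size (Ps : Finset Quartile) (j : ℕ) (a : Quartile → ℂ) : ℝ :=
  sSup ((fun p : Quartile × Finset Quartile =>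
      Real.sqrt ((∑ P ∈ p.2, ‖a P‖^2) / p.1.len)) ''
    {p | p.2 ⊆ Ps ∧ ∃ i ∈ ({1,2,3} : Set ℕ), i ≠ j ∧ IsTree i p.1 p.2})

/-- `energy_j((a_P)_{P∈Ps})`: the sup over subsets `D ⊆ Ps` with
`{P_j : P ∈ D}` pairwise disjoint of `(Σ_{P∈D} |a_{P_j}|²)^{1/2}`. -/
noncomputable def energy (Ps : Finset Quartile) (j : ℕ) (a : Quartile → ℂ) : ℝ :=
  sSup ((fun D : Finset Quartile => Real.sqrt (∑ P ∈ D, ‖a P‖^2)) ''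
    {D | D ⊆ Ps ∧ ∀ P ∈ D, ∀ P' ∈ D, P ≠ P' →
      Disjoint (P.tile j).area (P'.tile j).area})

/-- The `L^{1,∞}(I)` quasinorm `sup_{λ>0} λ |{x ∈ I : |g(x)| > λ}|`. -/
noncomputable def weakL1 (g : ℝ → ℝ) (I : Set ℝ) : ℝ :=
  sSup {r | ∃ lam : ℝ, 0 < lam ∧ r = lam * (volume {x ∈ I | lam < |g x|}).toReal}

/-- The square function `(Σ_{P∈T} |a_{P_j}|² χ_{I_P}/|I_P|)^{1/2}` of a tree. -/
noncomputable def treeFn (T : Finset Quartile) (a : Quartile → ℂ) : ℝ → ℝ :=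
  fun x => Real.sqrt (∑ P ∈ T, ‖a P‖^2 * (P.I.indicator (fun _ => (1:ℝ)) x) / P.len)

namespace SE

/-- Dyadic intervals at comparable scales that meet are nested. -/
lemma dy_meet (k : ℤ) (m : ℕ) (n n' : ℤ) (x : ℝ)
    (h1 : x ∈ Set.Ico ((2:ℝ)^k * n) ((2:ℝ)^k * (n+1)))
    (h2 : x ∈ Set.Ico ((2:ℝ)^(k+m) * n') ((2:ℝ)^(k+m) * (n'+1))) :
    n / 2^m = n' := by
  have hk : (0:ℝ) < 2^k := by positivity
  rw [zpow_add₀ (by norm_num), zpow_natCast] at h2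
  obtain ⟨a, b⟩ := h1
  obtain ⟨c, d⟩ := h2
  have e1 : (2:ℝ)^k * (2^m * n') < (2:ℝ)^k * (n+1) := by nlinarith
  have e2 : (2:ℝ)^k * n < (2:ℝ)^k * (2^m * (n'+1)) := by nlinarith
  have e1 := lt_of_mul_lt_mul_left e1 hk.le
  have e2 := lt_of_mul_lt_mul_left e2 hk.le
  have f1 : (2:ℤ)^m * n' < n + 1 := by exact_mod_cast e1
  have f2 : n < (2:ℤ)^m * (n'+1) := by exact_mod_cast e2
  have hp : (0:ℤ) < 2^m := by positivity
  apply le_antisymm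
  · have : n / 2^m < n' + 1 := Int.ediv_lt_of_lt_mul hp (by linarith)
    omega
  · exact Int.le_ediv_of_mul_le hp (by linarith)

lemma dy_sub (k : ℤ) (m : ℕ) (n n' : ℤ) (h : n / 2^m = n') :
    Set.Ico ((2:ℝ)^k * n) ((2:ℝ)^k * (n+1)) ⊆
      Set.Ico ((2:ℝ)^(k+m) * n') ((2:ℝ)^(k+m) * (n'+1)) := by
  have hk : (0:ℝ) < 2^k := by positivity
  have hp : (0:ℤ) < 2^m := by positivity
  have f1 : (2:ℤ)^m * n' ≤ n := by rw [← h]; exact Int.mul_ediv_self_le hp.ne'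
  have f2 : n + 1 ≤ (2:ℤ)^m * (n'+1) := by
    have := Int.lt_ediv_add_one_mul_self n hp
    rw [h] at this; linarith
  have e1 : (2:ℝ)^m * n' ≤ n := by exact_mod_cast f1
  have e2 : (n:ℝ) + 1 ≤ (2:ℝ)^m * (n'+1) := by exact_mod_cast f2
  rw [zpow_add₀ (by norm_num), zpow_natCast]
  apply Set.Ico_subset_Ico <;> nlinarith

/-- Integer form of the tile order. -/
def zle (p q : Tile) : Prop :=
  ∃ m : ℕ, p.k = q.k + m ∧ p.n / 2^m = q.n ∧ q.l / 2^m = p.l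

lemma left_mem (k n : ℤ) : (2:ℝ)^k * n ∈ Set.Ico ((2:ℝ)^k * n) ((2:ℝ)^k * (n+1)) := by
  have hk : (0:ℝ) < 2^k := by positivity
  constructor
  · exact le_rfl
  · nlinarith

lemma zle_of_meet (p q : Tile) (m : ℕ) (hm : p.k = q.k + m)
    (hI : (p.I ∩ q.I).Nonempty) (hw : (p.freq ∩ q.freq).Nonempty) : zle p q := by
  obtain ⟨x, hx1, hx2⟩ := hI
  obtain ⟨y, hy1, hy2⟩ := hw
  refine ⟨m, hm, ?_, ?_⟩
  · apply dy_meet (-p.k) m _ _ x hx1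
    rw [hm, show -(q.k + (m:ℤ)) + m = -q.k by ring]; exact hx2
  · apply dy_meet (q.k) m _ _ y hy2
    rw [← hm]; exact hy1

lemma zle_or (p q : Tile) (h : ¬ Disjoint p.area q.area) : zle p q ∨ zle q p := by
  rw [Set.not_disjoint_iff] at h
  obtain ⟨⟨x, y⟩, ⟨h1, h2⟩, ⟨h3, h4⟩⟩ := h
  rcases le_total q.k p.k with hk | hk
  · obtain ⟨m, hm⟩ := Int.le.dest hk
    exact Or.inl (zle_of_meet p q m hm.symm ⟨x, h1, h3⟩ ⟨y, h2, h4⟩)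
  · obtain ⟨m, hm⟩ := Int.le.dest hk
    exact Or.inr (zle_of_meet q p m hm.symm ⟨x, h3, h1⟩ ⟨y, h4, h2⟩)

lemma zle_I {p q : Tile} (h : zle p q) : p.I ⊆ q.I := by
  obtain ⟨m, hm, h1, h2⟩ := h
  have := dy_sub (-p.k) m _ _ h1
  rw [show -p.k + (m:ℤ) = -q.k by rw [hm]; ring] at this
  exact this

lemma zle_freq {p q : Tile} (h : zle p q) : q.freq ⊆ p.freq := by
  obtain ⟨m, hm, h1, h2⟩ := h
  have := dy_sub (q.k) m _ _ h2
  rw [← hm] at this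
  exact this

lemma le_iff (p q : Tile) : Tile.le p q ↔ zle p q := by
  constructor
  · rintro (⟨h1, h2⟩ | rfl)
    · rcases le_total q.k p.k with hk | hk
      · obtain ⟨m, hm⟩ := Int.le.dest hk
        exact zle_of_meet p q m hm.symm ⟨_, left_mem _ _, h1.1 (left_mem _ _)⟩
          ⟨_, h2 (left_mem _ _), left_mem _ _⟩
      · obtain ⟨m, hm⟩ := Int.le.dest hk
        have := zle_of_meet q p m hm.symm ⟨_, h1.1 (left_mem _ _), left_mem _ _⟩
          ⟨_, left_mem _ _, h2 (left_mem _ _)⟩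
        exact absurd (zle_I this) h1.2
    · exact ⟨0, by simp, by simp, by simp⟩
  · intro h
    by_cases hs : q.I ⊆ p.I
    · right
      obtain ⟨m, hm, h1, h2⟩ := h
      have hm0 : m = 0 := by
        by_contra h0
        have hq : (2:ℝ)^(-q.k) * q.n ∈ q.I := left_mem _ _
        have hqr : (2:ℝ)^(-q.k) * q.n + (2:ℝ)^(-p.k) ∈ q.I := by
          constructor
          · have : (0:ℝ) < (2:ℝ)^(-p.k) := by positivity
            linarith
          · have : (2:ℝ)^(-p.k) < (2:ℝ)^(-q.k) := zpow_lt_zpow_right₀ (by norm_num) (by omega)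
            linarith
        have a := (hs hq).1
        have b := (hs hqr).2
        linarith
      subst hm0
      obtain ⟨k, n, l⟩ := p
      obtain ⟨k', n', l'⟩ := q
      simp at hm h1 h2
      simp [hm, h1, h2]
    · exact Or.inl ⟨⟨zle_I h, hs⟩, zle_freq h⟩

/-- quartile version -/
lemma qle_iff (P t : Quartile) (i : ℕ) : Tile.le (P.tile i) (t.tile i) ↔
    ∃ m : ℕ, P.k = t.k + m ∧ P.n / 2^m = t.n ∧
      (4 * t.l + ((i-1:ℕ):ℤ)) / 2^m = 4 * P.l + ((i-1:ℕ):ℤ) := by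
  rw [le_iff]; rfl

lemma le_refl' (p : Tile) : Tile.le p p := Or.inr rfl

lemma div4 (l c : ℤ) (h0 : 0 ≤ c) (h4 : c < 4) (m : ℕ) : (4*l+c) / 2^(m+2) = l / 2^m := by
  rw [show (2:ℤ)^(m+2) = 4 * 2^m by ring, ← Int.ediv_ediv_of_nonneg (by norm_num)]
  congr 1; omega

lemma div_add (x : ℤ) (m n : ℕ) : x / 2^(m+n) = x / 2^m / 2^n := by
  rw [pow_add, Int.ediv_ediv_of_nonneg (by positivity)]

lemma len_pos (P : Quartile) : 0 < P.len := by unfold Quartile.len; positivity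

lemma len_le {P t : Quartile} {i : ℕ} (h : Tile.le (P.tile i) (t.tile i)) : P.len ≤ t.len := by
  obtain ⟨m, hm, -⟩ := (qle_iff _ _ _).1 h
  unfold Quartile.len
  exact zpow_le_zpow_right₀ (by norm_num) (by omega)

lemma qext {P Q : Quartile} (h1 : P.k = Q.k) (h2 : P.n = Q.n) (h3 : P.l = Q.l) : P = Q := by
  cases P; cases Q; simp_all

/-- within a tree -/
lemma same_tree_aux {i j : ℕ} (hi : i ∈ ({1,2,3} : Set ℕ)) (hj : j ∈ ({1,2,3} : Set ℕ))
    (hij : i ≠ j) {P P' t : Quartile} (h : Tile.le (P.tile i) (t.tile i))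
    (h' : Tile.le (P'.tile i) (t.tile i)) (hz : zle (P'.tile j) (P.tile j)) : P' = P := by
  obtain ⟨m1, a1, b1, c1⟩ := (qle_iff _ _ _).1 h
  obtain ⟨m2, a2, b2, c2⟩ := (qle_iff _ _ _).1 h'
  obtain ⟨m, a3, b3, c3⟩ := (qle_iff _ _ _).1 ((le_iff _ _).2 hz)
  have hm2 : m2 = m1 + m := by omega
  subst hm2
  rw [div_add, c1] at c2
  clear c1 b1 b2
  obtain _ | _ | m := m
  · simp at a3 b3 c3
    exact qext a3 b3 (by omega)
  · exfalso
    simp at hi hj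
    rcases hi with rfl | rfl | rfl <;> rcases hj with rfl | rfl | rfl <;> simp at * <;> omega
  · exfalso
    simp at hi hj
    rw [div4 _ _ (by omega) (by omega)] at c2 c3
    omega

lemma same_tree {i j : ℕ} (hi : i ∈ ({1,2,3} : Set ℕ)) (hj : j ∈ ({1,2,3} : Set ℕ))
    (hij : i ≠ j) {P P' t : Quartile} (h : Tile.le (P.tile i) (t.tile i))
    (h' : Tile.le (P'.tile i) (t.tile i)) (hne : P ≠ P') :
    Disjoint (P.tile j).area (P'.tile j).area := by
  by_contra hd
  rcases zle_or _ _ hd with hz | hz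
  · exact hne (same_tree_aux hi hj hij h' h hz)
  · exact hne (same_tree_aux hi hj hij h h' hz).symm

/-- `P` lies under the top `t`. -/
def under (P t : Quartile) : Prop := ∃ q ∈ ({1,2,3} : Set ℕ), Tile.le (P.tile q) (t.tile q)

lemma cross_A {i j : ℕ} (hi : i ∈ ({1,2,3} : Set ℕ)) (hj : j ∈ ({1,2,3} : Set ℕ))
    (hij : i ≠ j) {P P' t : Quartile} (h : Tile.le (P.tile i) (t.tile i))
    (hz : zle (P'.tile j) (P.tile j)) : under P' t := by
  obtain ⟨m1, a1, b1, c1⟩ := (qle_iff _ _ _).1 h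
  obtain ⟨m, a3, b3, c3⟩ := (qle_iff _ _ _).1 ((le_iff _ _).2 hz)
  have hk : P'.k = t.k + ((m1 + m : ℕ) : ℤ) := by push_cast; omega
  have hn : P'.n / 2^(m1+m) = t.n := by rw [add_comm, div_add, b3, b1]
  suffices ∃ q ∈ ({1,2,3} : Set ℕ), (4 * t.l + ((q-1:ℕ):ℤ)) / 2^(m1+m) = 4 * P'.l + ((q-1:ℕ):ℤ) by
    obtain ⟨q, hq, e⟩ := this
    exact ⟨q, hq, (qle_iff _ _ _).2 ⟨_, hk, hn, e⟩⟩
  have htl : t.l / 2^m1 = P.l := by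
    have : (4 * t.l + ((i-1:ℕ):ℤ)) / 2^(m1+2) = (4 * P.l + ((i-1:ℕ):ℤ)) / 2^2 := by
      rw [div_add, c1]
    simp at hi
    rw [div4 _ _ (by omega) (by omega)] at this
    rw [this]; norm_num; omega
  obtain _ | _ | m := m
  · refine ⟨i, hi, ?_⟩
    simp at a3 b3 c3
    have : P.l = P'.l := by omega
    simp [c1, this]
  · have hj1 : j = 1 := by
      simp at hj; simp at c3; omega
    subst hj1
    obtain _ | _ | m1 := m1
    · refine ⟨1, by simp, ?_⟩
      simp at *
      omega
    · exfalso
      simp at *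
      omega
    · simp at hi
      rw [div4 _ _ (by omega) (by omega)] at c1
      rcases hi with rfl | rfl | rfl
      · exact absurd rfl hij
      · refine ⟨1, by simp, ?_⟩
        rw [show m1 + 1 + 1 + (0 + 1) = (m1 + 1) + 2 by ring, div4 _ _ (by omega) (by omega), div_add, c1]
        simp at *; omega
      · refine ⟨2, by simp, ?_⟩
        rw [show m1 + 1 + 1 + (0 + 1) = (m1 + 1) + 2 by ring, div4 _ _ (by omega) (by omega), div_add, c1]
        simp at *; omega
  · refine ⟨j, hj, ?_⟩
    simp at hj
    rw [show m1 + (m + 1 + 1) = (m1 + m) + 2 by ring, div4 _ _ (by omega) (by omega), div_add, htl]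
    rw [div4 _ _ (by omega) (by omega)] at c3
    exact c3

/-- left endpoint of the frequency interval of the `i`-th tile -/
noncomputable def lft (i : ℕ) (t : Quartile) : ℝ := (2:ℝ)^(t.k) * (4 * t.l + ((i-1:ℕ):ℤ) : ℤ)

lemma lft_mem {i : ℕ} {P t : Quartile} (h : Tile.le (P.tile i) (t.tile i)) :
    lft i t ∈ (P.tile i).freq := zle_freq ((le_iff _ _).1 h) (left_mem _ _)

lemma cross_B {i j : ℕ} (hi : i ∈ ({1,2,3} : Set ℕ)) (hj : j ∈ ({1,2,3} : Set ℕ))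
    (hij : i ≠ j) : ∃ σ : ℝ, ∀ P P' t t' : Quartile, Tile.le (P.tile i) (t.tile i) →
    Tile.le (P'.tile i) (t'.tile i) → zle (P.tile j) (P'.tile j) → P ≠ P' →
    σ * lft i t' < σ * lft i t := by
  have key : ∀ P P' : Quartile, zle (P.tile j) (P'.tile j) → P ≠ P' → ∃ m : ℕ, P.k = P'.k + m ∧
      ((j < i → 4 * P'.l + i ≤ 2^m * (4 * P.l + ((i-1:ℕ):ℤ))) ∧
      (i < j → 2^m * (4 * P.l + i) ≤ 4 * P'.l + ((i-1:ℕ):ℤ))) := by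
    intro P P' hz hne
    obtain ⟨m, a3, b3, c3⟩ := (qle_iff _ _ _).1 ((le_iff _ _).2 hz)
    refine ⟨m, a3, ?_⟩
    simp at hi hj
    obtain _ | _ | m := m
    · exfalso
      simp at a3 b3 c3
      exact hne (qext a3 b3 (by omega))
    · simp at c3
      constructor <;> intro h <;> simp <;> omega
    · rw [div4 _ _ (by omega) (by omega)] at c3
      have hp : (0:ℤ) < 2^m := by positivity
      have f1 := Int.mul_ediv_self_le (x := P'.l) hp.ne'
      have f2 := Int.lt_ediv_add_one_mul_self P'.l hp
      rw [c3] at f1 f2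
      constructor
      · intro h
        have : (4 * P.l + ((j-1:ℕ):ℤ) + 1) * 2^m ≤ (4 * P.l + ((i-1:ℕ):ℤ)) * 2^m := by
          apply mul_le_mul_of_nonneg_right _ hp.le
          omega
        rw [pow_succ, pow_succ]
        have h3 : (i:ℤ) ≤ 4 := by omega
        linarith
      · intro h
        have : (4 * P.l + (i:ℤ)) * 2^m ≤ (4 * P.l + ((j-1:ℕ):ℤ)) * 2^m := by
          apply mul_le_mul_of_nonneg_right _ hp.le
          omega
        rw [pow_succ, pow_succ]
        have h3 : (0:ℤ) ≤ ((i-1:ℕ):ℤ) := by omega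
        linarith
  have hi1 : ((i-1:ℕ):ℝ) + 1 = i := by
    have : i - 1 + 1 = i := by simp at hi; omega
    exact_mod_cast this
  rcases lt_or_gt_of_ne hij with h | h
  · refine ⟨-1, fun P P' t t' ht ht' hz hne => ?_⟩
    obtain ⟨m, hm, -, e⟩ := key P P' hz hne
    have e := e h
    have e' : (2:ℝ)^m * (4 * P.l + i) ≤ 4 * P'.l + ((i-1:ℕ):ℝ) := by exact_mod_cast e
    have x1 := (lft_mem ht).2
    have x2 := (lft_mem ht').1
    simp only [Quartile.tile] at x1 x2
    push_cast at x1 x2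
    rw [hm, zpow_add₀ (by norm_num), zpow_natCast] at x1
    have hk : (0:ℝ) < 2^P'.k := by positivity
    have := mul_le_mul_of_nonneg_left e' hk.le
    rw [add_assoc, hi1] at x1
    linarith
  · refine ⟨1, fun P P' t t' ht ht' hz hne => ?_⟩
    obtain ⟨m, hm, e, -⟩ := key P P' hz hne
    have e := e h
    have e' : 4 * P'.l + i ≤ (2:ℝ)^m * (4 * P.l + ((i-1:ℕ):ℝ)) := by exact_mod_cast e
    have x1 := (lft_mem ht).1
    have x2 := (lft_mem ht').2
    simp only [Quartile.tile] at x1 x2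
    push_cast at x1 x2
    rw [hm, zpow_add₀ (by norm_num), zpow_natCast] at x1
    have hk : (0:ℝ) < 2^P'.k := by positivity
    have := mul_le_mul_of_nonneg_left e' hk.le
    rw [add_assoc, hi1] at x2
    linarith

lemma size_bdd (Ps : Finset Quartile) (j : ℕ) (a : Quartile → ℂ) :
    BddAbove ((fun p : Quartile × Finset Quartile =>
      Real.sqrt ((∑ P ∈ p.2, ‖a P‖^2) / p.1.len)) ''
    {p | p.2 ⊆ Ps ∧ ∃ i ∈ ({1,2,3} : Set ℕ), i ≠ j ∧ IsTree i p.1 p.2}) := by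
  refine ⟨Real.sqrt (∑ P ∈ Ps, ‖a P‖^2 / P.len), ?_⟩
  rintro _ ⟨⟨t, T⟩, ⟨hT, i, hi, hij, htree⟩, rfl⟩
  apply Real.sqrt_le_sqrt
  simp only
  rw [Finset.sum_div]
  calc ∑ P ∈ T, ‖a P‖^2 / t.len ≤ ∑ P ∈ T, ‖a P‖^2 / P.len := by
        apply Finset.sum_le_sum
        intro P hP
        exact div_le_div_of_nonneg_left (by positivity) (len_pos P) (len_le (htree P hP))
    _ ≤ _ := by
        apply Finset.sum_le_sum_of_subset_of_nonneg hT
        intro P _ _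
        have := len_pos P
        positivity

lemma size_nonneg (Ps : Finset Quartile) (j : ℕ) (a : Quartile → ℂ) : 0 ≤ size Ps j a := by
  apply Real.sSup_nonneg
  rintro _ ⟨p, -, rfl⟩
  exact Real.sqrt_nonneg _

lemma size_tree {Ps T : Finset Quartile} {i j : ℕ} (a : Quartile → ℂ) {t : Quartile}
    (hT : T ⊆ Ps) (hi : i ∈ ({1,2,3} : Set ℕ)) (hij : i ≠ j) (ht : IsTree i t T) :
    ∑ P ∈ T, ‖a P‖^2 ≤ size Ps j a ^ 2 * t.len := by
  have h : Real.sqrt ((∑ P ∈ T, ‖a P‖^2) / t.len) ≤ size Ps j a :=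
    le_csSup (size_bdd Ps j a) ⟨(t, T), ⟨hT, i, hi, hij, ht⟩, rfl⟩
  have := (Real.sqrt_le_left (size_nonneg _ _ _)).1 h
  rwa [div_le_iff₀ (len_pos t)] at this

lemma size_le {Ps : Finset Quartile} {j : ℕ} {a : Quartile → ℂ} {c : ℝ} (hc : 0 ≤ c)
    (h : ∀ i ∈ ({1,2,3} : Set ℕ), i ≠ j → ∀ T ⊆ Ps, ∀ t, IsTree i t T →
      ∑ P ∈ T, ‖a P‖^2 ≤ c ^ 2 * t.len) : size Ps j a ≤ c := by
  apply Real.sSup_le _ hc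
  rintro _ ⟨⟨t, T⟩, ⟨hT, i, hi, hij, htree⟩, rfl⟩
  rw [Real.sqrt_le_left hc, div_le_iff₀ (len_pos t)]
  exact h i hi hij T hT t htree

lemma size_mono {Ps Qs : Finset Quartile} (j : ℕ) (a : Quartile → ℂ) (h : Qs ⊆ Ps) :
    size Qs j a ≤ size Ps j a :=
  size_le (size_nonneg _ _ _) fun _ hi hij _ hT _ ht => size_tree a (hT.trans h) hi hij ht

lemma exists_ne (j : ℕ) : ∃ i ∈ ({1,2,3} : Set ℕ), i ≠ j := by
  by_cases h : j = 1
  · exact ⟨2, by simp, by omega⟩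
  · exact ⟨1, by simp, by omega⟩

lemma size_single {Ps : Finset Quartile} (j : ℕ) (a : Quartile → ℂ) {P : Quartile}
    (hP : P ∈ Ps) : ‖a P‖ ≤ size Ps j a * Real.sqrt P.len := by
  obtain ⟨i, hi, hij⟩ := exists_ne j
  have := size_tree (Ps := Ps) (T := {P}) (t := P) a (by simpa using hP) hi hij
    (by intro Q hQ; rw [Finset.mem_singleton] at hQ; subst hQ; exact Or.inr rfl)
  rw [Finset.sum_singleton] at this
  apply le_of_sq_le_sq _ (mul_nonneg (size_nonneg _ _ _) (Real.sqrt_nonneg _))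
  rwa [mul_pow, Real.sq_sqrt (len_pos P).le]

/-- pairwise disjointness of the `j`-tiles -/
def DJ (j : ℕ) (D : Finset Quartile) : Prop := ∀ P ∈ D, ∀ P' ∈ D, P ≠ P' →
      Disjoint (P.tile j).area (P'.tile j).area

lemma energy_nonneg (Ps : Finset Quartile) (j : ℕ) (a : Quartile → ℂ) : 0 ≤ energy Ps j a := by
  apply Real.sSup_nonneg
  rintro _ ⟨p, -, rfl⟩
  exact Real.sqrt_nonneg _

lemma energy_le {Ps D : Finset Quartile} {j : ℕ} (a : Quartile → ℂ) (hD : D ⊆ Ps) (h : DJ j D) :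
    ∑ P ∈ D, ‖a P‖^2 ≤ energy Ps j a ^ 2 := by
  have hb : BddAbove ((fun D : Finset Quartile => Real.sqrt (∑ P ∈ D, ‖a P‖^2)) ''
    {D | D ⊆ Ps ∧ ∀ P ∈ D, ∀ P' ∈ D, P ≠ P' →
      Disjoint (P.tile j).area (P'.tile j).area}) := by
    refine ⟨Real.sqrt (∑ P ∈ Ps, ‖a P‖^2), ?_⟩
    rintro _ ⟨D, ⟨hD, -⟩, rfl⟩
    apply Real.sqrt_le_sqrt
    exact Finset.sum_le_sum_of_subset_of_nonneg hD fun _ _ _ => by positivity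
  have : Real.sqrt (∑ P ∈ D, ‖a P‖^2) ≤ energy Ps j a := le_csSup hb ⟨D, ⟨hD, h⟩, rfl⟩
  exact (Real.sqrt_le_left (energy_nonneg _ _ _)).1 this

open Classical in
/-- what remains after removing everything under the tops -/
noncomputable def rem (Ps : Finset Quartile) (L : List Quartile) : Finset Quartile :=
  Ps.filter (fun P => ∀ t ∈ L, ¬ under P t)

lemma mem_rem {Ps : Finset Quartile} {L : List Quartile} {P : Quartile} :
    P ∈ rem Ps L ↔ P ∈ Ps ∧ ∀ t ∈ L, ¬ under P t := by
  classical
  unfold rem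
  rw [Finset.mem_filter]

lemma rem_sub (Ps : Finset Quartile) (L : List Quartile) : rem Ps L ⊆ Ps :=
  fun _ h => (mem_rem.1 h).1

lemma select {i j : ℕ} (hi : i ∈ ({1,2,3} : Set ℕ)) (hj : j ∈ ({1,2,3} : Set ℕ))
    (hij : i ≠ j) (a : Quartile → ℂ) {c : ℝ} (hc : 0 < c) (Ps : Finset Quartile) :
    ∃ D ⊆ Ps, DJ j D ∧ ∃ L : List Quartile,
      c^2 * (L.map Quartile.len).sum ≤ ∑ P ∈ D, ‖a P‖^2 ∧
      ∀ T ⊆ rem Ps L, ∀ t, IsTree i t T → ∑ P ∈ T, ‖a P‖^2 ≤ c^2 * t.len := by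
  classical
  obtain ⟨σ, hσ⟩ := cross_B hi hj hij
  let Bad : Finset Quartile → Quartile → Prop := fun T t =>
    IsTree i t T ∧ c^2 * t.len < ∑ P ∈ T, ‖a P‖^2
  have hch : ∀ T, ∃ t, (∃ t, Bad T t) → Bad T t := by
    intro T
    by_cases h : ∃ t, Bad T t
    · obtain ⟨t, ht⟩ := h
      exact ⟨t, fun _ => ht⟩
    · exact ⟨⟨0,0,0⟩, fun h' => absurd h' h⟩
  choose top htop using hch
  suffices ∀ N : ℕ, ∀ Ps : Finset Quartile, Ps.card ≤ N → ∃ D ⊆ Ps, DJ j D ∧ ∃ L : List Quartile,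
      c^2 * (L.map Quartile.len).sum ≤ ∑ P ∈ D, ‖a P‖^2 ∧
      (∀ P ∈ D, ∃ T ⊆ Ps, P ∈ T ∧ ∃ t, Bad T t) ∧
      ∀ T ⊆ rem Ps L, ∀ t, IsTree i t T → ∑ P ∈ T, ‖a P‖^2 ≤ c^2 * t.len by
    obtain ⟨D, h1, h2, L, h3, -, h4⟩ := this _ Ps le_rfl
    exact ⟨D, h1, h2, L, h3, h4⟩
  intro N
  induction N with
  | zero =>
    intro Ps hPs
    have : Ps = ∅ := by simpa using hPs
    subst this
    refine ⟨∅, by simp, by intro P hP; simp at hP, [], by simp, by simp, ?_⟩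
    intro T hT t ht
    have : T = ∅ := Finset.subset_empty.1 (hT.trans (rem_sub _ _))
    subst this
    have := len_pos t
    simp; positivity
  | succ N ih =>
    intro Ps hPs
    by_cases hb : ∃ T ⊆ Ps, ∃ t, Bad T t
    swap
    · refine ⟨∅, by simp, by intro P hP; simp at hP, [], by simp, by simp, ?_⟩
      intro T hT t ht
      by_contra hcon
      exact hb ⟨T, hT.trans (rem_sub _ _), t, ht, not_le.1 hcon⟩
    obtain ⟨T, hTm, hmin⟩ := Finset.exists_min_image
      (Ps.powerset.filter (fun T => ∃ t, Bad T t)) (fun T => σ * lft i (top T)) (by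
        obtain ⟨T, hT, h⟩ := hb
        exact ⟨T, by simp only [Finset.mem_filter, Finset.mem_powerset]; exact ⟨hT, h⟩⟩)
    simp only [Finset.mem_filter, Finset.mem_powerset] at hTm hmin
    obtain ⟨hTP, hTb⟩ := hTm
    obtain ⟨htree, hbig⟩ := htop T hTb
    set t := top T with ht
    have hund : ∀ P ∈ T, under P t := fun P hP => ⟨i, hi, htree P hP⟩
    have hne : T.Nonempty := by
      by_contra h
      rw [Finset.not_nonempty_iff_eq_empty] at h
      rw [h] at hbig
      have := len_pos t
      simp at hbig
      nlinarith [sq_nonneg c, mul_nonneg (sq_nonneg c) this.le]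
    set Q := rem Ps [t] with hQ
    have hQP : Q ⊆ Ps := rem_sub _ _
    have hcard : Q.card ≤ N := by
      obtain ⟨P, hP⟩ := hne
      have : Q ⊂ Ps := by
        refine ⟨hQP, fun h => ?_⟩
        exact (mem_rem.1 (h (hTP hP))).2 t (by simp) (hund P hP)
      have := Finset.card_lt_card this
      omega
    obtain ⟨D, hDQ, hDJ, L, hL, hDb, hfin⟩ := ih Q hcard
    have hcross : ∀ P ∈ T, ∀ P' ∈ D, Disjoint (P.tile j).area (P'.tile j).area := by
      intro P hP P' hP'
      have hnu : ¬ under P' t := (mem_rem.1 (hDQ hP')).2 t (by simp)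
      by_contra hd
      rcases zle_or _ _ hd with hz | hz
      · obtain ⟨T', hT', hPT', hbad'⟩ := hDb P' hP'
        have h1 := hmin T' ⟨hT'.trans hQP, hbad'⟩
        have h2 := hσ P P' t (top T') (htree P hP) ((htop T' hbad').1 P' hPT') hz (by
          rintro rfl; exact hnu (hund _ hP))
        linarith
      · exact hnu (cross_A hi hj hij (htree P hP) hz)
    have hdisj : Disjoint T D := by
      rw [Finset.disjoint_left]
      intro P hP hPD
      exact (mem_rem.1 (hDQ hPD)).2 t (by simp) (hund P hP)
    refine ⟨T ∪ D, Finset.union_subset hTP (hDQ.trans hQP), ?_, t :: L, ?_, ?_, ?_⟩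
    · intro P hP P' hP' hne
      rw [Finset.mem_union] at hP hP'
      rcases hP with hP | hP <;> rcases hP' with hP' | hP'
      · exact same_tree hi hj hij (htree P hP) (htree P' hP') hne
      · exact hcross P hP P' hP'
      · exact (hcross P' hP' P hP).symm
      · exact hDJ P hP P' hP' hne
    · rw [Finset.sum_union hdisj, List.map_cons, List.sum_cons]
      linarith
    · intro P hP
      rw [Finset.mem_union] at hP
      rcases hP with hP | hP
      · exact ⟨T, hTP, hP, hTb⟩
      · obtain ⟨T', h1, h2⟩ := hDb P hP
        exact ⟨T', h1.trans hQP, h2⟩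
    · intro T' hT'
      apply hfin
      intro P hP
      have := mem_rem.1 (hT' hP)
      refine mem_rem.2 ⟨mem_rem.2 ⟨this.1, ?_⟩, ?_⟩
      · intro s hs; exact this.2 s (by simp at hs; simp [hs])
      · intro s hs; exact this.2 s (by simp [hs])

lemma rem_app_left (Ps : Finset Quartile) (L M : List Quartile) : rem Ps (L ++ M) ⊆ rem Ps L := by
  intro P hP
  have := mem_rem.1 hP
  exact mem_rem.2 ⟨this.1, fun t ht => this.2 t (by simp [ht])⟩

lemma rem_app_right (Ps : Finset Quartile) (L M : List Quartile) : rem Ps (L ++ M) ⊆ rem Ps M := by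
  intro P hP
  have := mem_rem.1 hP
  exact mem_rem.2 ⟨this.1, fun t ht => this.2 t (by simp [ht])⟩

lemma select_size {j : ℕ} (hj : j ∈ ({1,2,3} : Set ℕ)) (a : Quartile → ℂ) {c : ℝ} (hc : 0 < c)
    (Ps : Finset Quartile) : ∃ L : List Quartile,
      c^2 * (L.map Quartile.len).sum ≤ 2 * energy Ps j a ^ 2 ∧ size (rem Ps L) j a ≤ c := by
  have : ∃ i₁ ∈ ({1,2,3} : Set ℕ), ∃ i₂ ∈ ({1,2,3} : Set ℕ), i₁ ≠ j ∧ i₂ ≠ j ∧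
      ∀ i ∈ ({1,2,3} : Set ℕ), i ≠ j → i = i₁ ∨ i = i₂ := by
    simp at hj
    rcases hj with rfl | rfl | rfl
    · exact ⟨2, by simp, 3, by simp, by simp, by simp, by simp⟩
    · exact ⟨1, by simp, 3, by simp, by simp, by simp, by simp⟩
    · exact ⟨1, by simp, 2, by simp, by simp, by simp, by simp⟩
  obtain ⟨i₁, hi₁, i₂, hi₂, hn₁, hn₂, hall⟩ := this
  obtain ⟨D, hD, hDJ, L, hL, hf⟩ := select hi₁ hj hn₁ a hc Ps
  obtain ⟨D', hD', hDJ', L', hL', hf'⟩ := select hi₂ hj hn₂ a hc Ps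
  refine ⟨L ++ L', ?_, ?_⟩
  · have := energy_le a hD hDJ
    have := energy_le a hD' hDJ'
    rw [List.map_append, List.sum_append]
    linarith
  · apply size_le hc.le
    intro i hi hij T hT t ht
    rcases hall i hi hij with rfl | rfl
    · exact hf T (hT.trans (rem_app_left _ _ _)) t ht
    · exact hf' T (hT.trans (rem_app_right _ _ _)) t ht

/-- the positive summand -/
noncomputable def g (a₁ a₂ a₃ : Quartile → ℂ) (P : Quartile) : ℝ :=
  1 / Real.sqrt P.len * (‖a₁ P‖ * ‖a₂ P‖ * ‖a₃ P‖)

lemma g_nonneg (a₁ a₂ a₃ : Quartile → ℂ) (P : Quartile) : 0 ≤ g a₁ a₂ a₃ P := by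
  unfold g; positivity

lemma tree_aux {T : Finset Quartile} {x y z : Quartile → ℂ} {A B C ℓ : ℝ}
    (hB : 0 ≤ B) (hC : 0 ≤ C) (hl : 0 ≤ ℓ)
    (h1 : ∀ P ∈ T, ‖x P‖ ≤ A * Real.sqrt P.len)
    (h2 : ∑ P ∈ T, ‖y P‖^2 ≤ B^2 * ℓ) (h3 : ∑ P ∈ T, ‖z P‖^2 ≤ C^2 * ℓ) (hA : 0 ≤ A) :
    ∑ P ∈ T, g x y z P ≤ ℓ * (A * B * C) := by
  calc ∑ P ∈ T, g x y z P ≤ ∑ P ∈ T, A * (‖y P‖ * ‖z P‖) := by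
        apply Finset.sum_le_sum
        intro P hP
        unfold g
        have hs : 0 < Real.sqrt P.len := Real.sqrt_pos.2 (len_pos P)
        have : 1 / Real.sqrt P.len * ‖x P‖ ≤ A := by
          rw [one_div, inv_mul_le_iff₀ hs, mul_comm]; exact h1 P hP
        calc _ = (1 / Real.sqrt P.len * ‖x P‖) * (‖y P‖ * ‖z P‖) := by ring
          _ ≤ _ := mul_le_mul_of_nonneg_right this (by positivity)
    _ = A * ∑ P ∈ T, ‖y P‖ * ‖z P‖ := by rw [Finset.mul_sum]
    _ ≤ A * (ℓ * (B * C)) := by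
        apply mul_le_mul_of_nonneg_left _ hA
        apply le_of_sq_le_sq _ (by positivity)
        calc _ ≤ (∑ P ∈ T, ‖y P‖^2) * (∑ P ∈ T, ‖z P‖^2) := Finset.sum_mul_sq_le_sq_mul_sq _ _ _
          _ ≤ (B^2 * ℓ) * (C^2 * ℓ) := by
              apply mul_le_mul h2 h3 (by positivity) (by positivity)
          _ = _ := by ring
    _ = _ := by ring

lemma tree_est {Ps T : Finset Quartile} {t : Quartile} {q : ℕ} (hq : q ∈ ({1,2,3} : Set ℕ))
    (hT : T ⊆ Ps) (ht : IsTree q t T) (a₁ a₂ a₃ : Quartile → ℂ) :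
    ∑ P ∈ T, g a₁ a₂ a₃ P ≤ t.len * (size Ps 1 a₁ * size Ps 2 a₂ * size Ps 3 a₃) := by
  have n1 := size_nonneg Ps 1 a₁
  have n2 := size_nonneg Ps 2 a₂
  have n3 := size_nonneg Ps 3 a₃
  have hl := (len_pos t).le
  have hq' := hq
  simp at hq'
  rcases hq' with rfl | rfl | rfl
  · exact tree_aux n2 n3 hl (fun P hP => size_single 1 a₁ (hT hP))
      (size_tree a₂ hT hq (by norm_num) ht) (size_tree a₃ hT hq (by norm_num) ht) n1
  · have := tree_aux n1 n3 hl (fun P hP => size_single 2 a₂ (hT hP))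
      (size_tree a₁ hT hq (by norm_num) ht) (size_tree a₃ hT hq (by norm_num) ht) n2
    calc _ = ∑ P ∈ T, g a₂ a₁ a₃ P := Finset.sum_congr rfl fun P _ => by unfold g; ring
      _ ≤ _ := this
      _ = _ := by ring
  · have := tree_aux n1 n2 hl (fun P hP => size_single 3 a₃ (hT hP))
      (size_tree a₁ hT hq (by norm_num) ht) (size_tree a₂ hT hq (by norm_num) ht) n3
    calc _ = ∑ P ∈ T, g a₃ a₁ a₂ P := Finset.sum_congr rfl fun P _ => by unfold g; ring
      _ ≤ _ := this
      _ = _ := by ring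

lemma forest_est (Ps : Finset Quartile) (a₁ a₂ a₃ : Quartile → ℂ) (L : List Quartile) :
    ∑ P ∈ Ps, g a₁ a₂ a₃ P ≤ ∑ P ∈ rem Ps L, g a₁ a₂ a₃ P +
      3 * (L.map Quartile.len).sum * (size Ps 1 a₁ * size Ps 2 a₂ * size Ps 3 a₃) := by
  classical
  induction L with
  | nil =>
    have : rem Ps [] = Ps := by ext P; simp [mem_rem]
    rw [this]; simp
  | cons t L ih =>
    let U : ℕ → Finset Quartile := fun q => Ps.filter (fun P => Tile.le (P.tile q) (t.tile q))
    have hU : ∀ q ∈ ({1,2,3} : Set ℕ), ∑ P ∈ U q, g a₁ a₂ a₃ P ≤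
        t.len * (size Ps 1 a₁ * size Ps 2 a₂ * size Ps 3 a₃) := fun q hq =>
      tree_est hq (Finset.filter_subset _ _) (fun P hP => (Finset.mem_filter.1 hP).2) _ _ _
    have hsub : rem Ps L ⊆ rem Ps (t :: L) ∪ (U 1 ∪ (U 2 ∪ U 3)) := by
      intro P hP
      have h := mem_rem.1 hP
      by_cases hu : under P t
      · obtain ⟨q, hq, hle⟩ := hu
        simp at hq
        simp only [Finset.mem_union, U, Finset.mem_filter]
        rcases hq with rfl | rfl | rfl <;> simp [h.1, hle]
      · apply Finset.mem_union_left
        refine mem_rem.2 ⟨h.1, fun s hs => ?_⟩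
        rcases List.mem_cons.1 hs with rfl | hs
        · exact hu
        · exact h.2 s hs
    have un : ∀ A B : Finset Quartile, ∑ P ∈ A ∪ B, g a₁ a₂ a₃ P ≤
        ∑ P ∈ A, g a₁ a₂ a₃ P + ∑ P ∈ B, g a₁ a₂ a₃ P := by
      intro A B
      rw [← Finset.sum_union_inter]
      have : 0 ≤ ∑ P ∈ A ∩ B, g a₁ a₂ a₃ P := Finset.sum_nonneg fun P _ => g_nonneg _ _ _ P
      linarith
    have h0 := Finset.sum_le_sum_of_subset_of_nonneg hsub
      (fun P _ _ => g_nonneg a₁ a₂ a₃ P)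
    have h1 := un (rem Ps (t :: L)) (U 1 ∪ (U 2 ∪ U 3))
    have h2 := un (U 1) (U 2 ∪ U 3)
    have h3 := un (U 2) (U 3)
    have h4 := hU 1 (by simp)
    have h5 := hU 2 (by simp)
    have h6 := hU 3 (by simp)
    rw [List.map_cons, List.sum_cons]
    linarith

lemma energy_mono {Ps Qs : Finset Quartile} (j : ℕ) (a : Quartile → ℂ) (h : Qs ⊆ Ps) :
    energy Qs j a ≤ energy Ps j a := by
  apply Real.sSup_le _ (energy_nonneg _ _ _)
  rintro _ ⟨D, ⟨hD, hd⟩, rfl⟩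
  rw [Real.sqrt_le_left (energy_nonneg _ _ _)]
  exact energy_le a (hD.trans h) hd

/-- one level of the stopping-time decomposition -/
lemma level (Qs : Finset Quartile) (a₁ a₂ a₃ : Quartile → ℂ) {E₁ E₂ E₃ lam : ℝ}
    (hE₁ : 0 < E₁) (hE₂ : 0 < E₂) (hE₃ : 0 < E₃) (hl : 0 < lam)
    (e₁ : energy Qs 1 a₁ ≤ E₁) (e₂ : energy Qs 2 a₂ ≤ E₂) (e₃ : energy Qs 3 a₃ ≤ E₃) :
    ∃ Q' ⊆ Qs, size Q' 1 a₁ ≤ lam / 2 * E₁ ∧ size Q' 2 a₂ ≤ lam / 2 * E₂ ∧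
      size Q' 3 a₃ ≤ lam / 2 * E₃ ∧
      ∑ P ∈ Qs, g a₁ a₂ a₃ P ≤ ∑ P ∈ Q', g a₁ a₂ a₃ P +
        72 * (lam^2)⁻¹ * (size Qs 1 a₁ * size Qs 2 a₂ * size Qs 3 a₃) := by
  have one : ∀ j ∈ ({1,2,3} : Set ℕ), ∀ (a : Quartile → ℂ) (E : ℝ), 0 < E → energy Qs j a ≤ E →
      ∃ L : List Quartile, (L.map Quartile.len).sum ≤ 8 * (lam^2)⁻¹ ∧
        size (rem Qs L) j a ≤ lam / 2 * E := by
    intro j hj a E hE he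
    obtain ⟨L, h1, h2⟩ := select_size hj a (c := lam / 2 * E) (by positivity) Qs
    refine ⟨L, ?_, h2⟩
    have h3 : energy Qs j a ^ 2 ≤ E^2 := pow_le_pow_left₀ (energy_nonneg _ _ _) he 2
    have h4 : E^2 * (lam^2 * (L.map Quartile.len).sum) ≤ E^2 * 8 := by nlinarith
    have h5 := le_of_mul_le_mul_left h4 (by positivity)
    rw [← div_eq_mul_inv, le_div_iff₀ (by positivity)]
    linarith
  obtain ⟨L₁, x1, y1⟩ := one 1 (by simp) a₁ E₁ hE₁ e₁
  obtain ⟨L₂, x2, y2⟩ := one 2 (by simp) a₂ E₂ hE₂ e₂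
  obtain ⟨L₃, x3, y3⟩ := one 3 (by simp) a₃ E₃ hE₃ e₃
  refine ⟨rem Qs (L₁ ++ (L₂ ++ L₃)), rem_sub _ _, ?_, ?_, ?_, ?_⟩
  · exact (size_mono _ _ (rem_app_left _ _ _)).trans y1
  · exact (size_mono _ _ ((rem_app_right _ _ _).trans (rem_app_left _ _ _))).trans y2
  · exact (size_mono _ _ ((rem_app_right _ _ _).trans (rem_app_right _ _ _))).trans y3
  · refine (forest_est Qs a₁ a₂ a₃ (L₁ ++ (L₂ ++ L₃))).trans ?_
    have n1 := size_nonneg Qs 1 a₁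
    have n2 := size_nonneg Qs 2 a₂
    have n3 := size_nonneg Qs 3 a₃
    refine add_le_add le_rfl (mul_le_mul_of_nonneg_right ?_ (by positivity))
    simp only [List.map_append, List.sum_append]
    linarith

lemma min_le_rpow {s l α : ℝ} (hs : 0 < s) (hl : 0 < l) (h0 : 0 ≤ α) (h1 : α ≤ 1) :
    min s l ≤ s^α * l^(1-α) := by
  have hm : 0 < min s l := lt_min hs hl
  calc min s l = (min s l)^α * (min s l)^(1-α) := by
        rw [← Real.rpow_add hm]; simp
    _ ≤ _ := mul_le_mul (Real.rpow_le_rpow hm.le (min_le_left _ _) h0)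
        (Real.rpow_le_rpow hm.le (min_le_right _ _) (by linarith)) (by positivity) (by positivity)

lemma term_alpha {s₁ s₂ s₃ l α θ₁ θ₂ θ₃ : ℝ} (hs₁ : 0 < s₁) (hs₂ : 0 < s₂) (hs₃ : 0 < s₃)
    (hl : 0 < l) (h0 : 0 ≤ α) (h1 : α ≤ 1) (h₂ : 0 ≤ θ₂) (h₃ : 0 ≤ θ₃)
    (h₂' : θ₂ < 1) (h₃' : θ₃ < 1) (hsum : θ₁ + θ₂ + θ₃ = 1) :
    (l^2)⁻¹ * (min s₁ l * min s₂ l * min s₃ l) ≤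
      s₁^θ₁ * s₂^θ₂ * s₃^θ₃ * (s₁ / l)^(α - θ₁) := by
  have m1 : 0 < min s₁ l := lt_min hs₁ hl
  have m2 : 0 < min s₂ l := lt_min hs₂ hl
  have m3 : 0 < min s₃ l := lt_min hs₃ hl
  have e : (s₁^α * l^(1-α)) * (s₂^θ₂ * l^(1-θ₂)) * (s₃^θ₃ * l^(1-θ₃)) =
      l^2 * (s₁^θ₁ * s₂^θ₂ * s₃^θ₃ * (s₁ / l)^(α - θ₁)) := by
    have a1 : s₁^α = s₁^θ₁ * s₁^(α-θ₁) := by rw [← Real.rpow_add hs₁]; congr 1; ring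
    have a2 : l^(1-α) * l^(1-θ₂) * l^(1-θ₃) = l^2 * (l^(α-θ₁))⁻¹ := by
      rw [← Real.rpow_add hl, ← Real.rpow_add hl, ← Real.rpow_neg hl.le, ← Real.rpow_natCast,
        ← Real.rpow_add hl]
      congr 1; push_cast; linarith
    rw [Real.div_rpow hs₁.le hl.le, a1]
    calc _ = (s₁^θ₁ * s₁^(α-θ₁)) * s₂^θ₂ * s₃^θ₃ * (l^(1-α) * l^(1-θ₂) * l^(1-θ₃)) := by ring
      _ = _ := by rw [a2]; ring
  rw [inv_mul_le_iff₀ (by positivity), ← e]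
  have b1 := min_le_rpow hs₁ hl h0 h1
  have b2 := min_le_rpow hs₂ hl h₂ h₂'.le
  have b3 := min_le_rpow hs₃ hl h₃ h₃'.le
  gcongr

lemma tele {r v : ℝ} (hr : 1 < r) (hv : 0 < v) : min v v⁻¹ ≤
    2 * (1 + r) / (r - 1) * (r * v / (1 + r * v) - v / (1 + v)) := by
  have hr' : 0 < r - 1 := by linarith
  have hr0 : 0 < r := by linarith
  have e : 2 * (1 + r) / (r - 1) * (r * v / (1 + r * v) - v / (1 + v)) =
      2 * (1 + r) * v / ((1 + r * v) * (1 + v)) := by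
    field_simp; ring
  rw [e, le_div_iff₀ (by positivity)]
  rcases le_total v 1 with h | h
  · have hrv : r * v ≤ r := by nlinarith
    calc min v v⁻¹ * ((1 + r * v) * (1 + v)) ≤ v * ((1 + r) * (1 + 1)) := by
          gcongr
          exact min_le_left _ _
      _ = _ := by ring
  · calc min v v⁻¹ * ((1 + r * v) * (1 + v)) ≤ v⁻¹ * ((v + r * v) * (v + v)) := by
          gcongr
          exact min_le_right _ _
      _ = _ := by field_simp; ring

/-- the summation over all levels, when `0 < θ₁` -/
lemma sum_levels₁ (θ₁ θ₂ θ₃ : ℝ) (h₁ : 0 < θ₁) (h₂ : 0 ≤ θ₂) (h₃ : 0 ≤ θ₃)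
    (h₁' : θ₁ < 1) (h₂' : θ₂ < 1) (h₃' : θ₃ < 1) (hsum : θ₁ + θ₂ + θ₃ = 1) :
    ∃ C : ℝ, 0 < C ∧ ∀ s₁ s₂ s₃ l : ℝ, 0 < s₁ → 0 < s₂ → 0 < s₃ → 0 < l → ∀ N : ℕ,
      ∑ m ∈ Finset.range N, ((l / 2^m)^2)⁻¹ *
        (min s₁ (l / 2^m) * min s₂ (l / 2^m) * min s₃ (l / 2^m)) ≤
      C * (s₁^θ₁ * s₂^θ₂ * s₃^θ₃) := by
  obtain ⟨ε, hε, he1, he2⟩ : ∃ ε : ℝ, 0 < ε ∧ ε ≤ θ₁ ∧ ε ≤ 1 - θ₁ :=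
    ⟨min θ₁ (1-θ₁), lt_min h₁ (by linarith), min_le_left _ _, min_le_right _ _⟩
  set r : ℝ := 2^ε with hr
  have hr1 : 1 < r := Real.one_lt_rpow (by norm_num) hε
  have hrm : 0 < r - 1 := by linarith
  refine ⟨2 * (1 + r) / (r - 1), by positivity, ?_⟩
  intro s₁ s₂ s₃ l hs₁ hs₂ hs₃ hl N
  set v : ℕ → ℝ := fun m => (s₁ / (l / 2^m))^ε with hv
  have hv0 : ∀ m, 0 < v m := fun m => by simp only [hv]; positivity
  have hvs : ∀ m, v (m+1) = r * v m := by
    intro m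
    simp only [hv, hr]
    rw [← Real.mul_rpow (by norm_num) (by positivity)]
    congr 1
    rw [pow_succ]; field_simp
  set B := s₁^θ₁ * s₂^θ₂ * s₃^θ₃ with hB
  have hBpos : 0 < B := by positivity
  calc _ ≤ ∑ m ∈ Finset.range N, B * (2 * (1 + r) / (r - 1)) *
        (v (m+1) / (1 + v (m+1)) - v m / (1 + v m)) := by
        apply Finset.sum_le_sum
        intro m _
        have hlm : 0 < l / 2^m := by positivity
        have t1 := term_alpha (α := θ₁ + ε) hs₁ hs₂ hs₃ hlm (by linarith) (by linarith) h₂ h₃ h₂' h₃' hsum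
        have t2 := term_alpha (α := θ₁ - ε) hs₁ hs₂ hs₃ hlm (by linarith) (by linarith) h₂ h₃ h₂' h₃' hsum
        rw [show θ₁ + ε - θ₁ = ε by ring] at t1
        rw [show θ₁ - ε - θ₁ = -ε by ring, Real.rpow_neg (by positivity)] at t2
        have t3 := tele hr1 (hv0 m)
        rw [← hvs] at t3
        rw [mul_assoc B]
        refine le_trans ?_ (mul_le_mul_of_nonneg_left t3 hBpos.le)
        rcases min_choice (v m) (v m)⁻¹ with h | h <;> rw [h]
        · exact t1
        · exact t2
    _ = B * (2 * (1 + r) / (r - 1)) * (v N / (1 + v N) - v 0 / (1 + v 0)) := by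
        rw [← Finset.mul_sum, Finset.sum_range_sub (fun m => v m / (1 + v m))]
    _ ≤ B * (2 * (1 + r) / (r - 1)) * 1 := by
        have a := hv0 N
        have b := hv0 0
        have : v N / (1 + v N) ≤ 1 := by rw [div_le_one (by positivity)]; linarith
        have : 0 ≤ v 0 / (1 + v 0) := by positivity
        apply mul_le_mul_of_nonneg_left _ (by positivity)
        linarith
    _ = _ := by ring

lemma sum_levels (θ₁ θ₂ θ₃ : ℝ) (h₁ : 0 ≤ θ₁) (h₂ : 0 ≤ θ₂) (h₃ : 0 ≤ θ₃)
    (h₁' : θ₁ < 1) (h₂' : θ₂ < 1) (h₃' : θ₃ < 1) (hsum : θ₁ + θ₂ + θ₃ = 1) :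
    ∃ C : ℝ, 0 < C ∧ ∀ s₁ s₂ s₃ l : ℝ, 0 < s₁ → 0 < s₂ → 0 < s₃ → 0 < l → ∀ N : ℕ,
      ∑ m ∈ Finset.range N, ((l / 2^m)^2)⁻¹ *
        (min s₁ (l / 2^m) * min s₂ (l / 2^m) * min s₃ (l / 2^m)) ≤
      C * (s₁^θ₁ * s₂^θ₂ * s₃^θ₃) := by
  rcases h₁.lt_or_eq with h | h
  · exact sum_levels₁ θ₁ θ₂ θ₃ h h₂ h₃ h₁' h₂' h₃' hsum
  · obtain ⟨C, hC, hh⟩ := sum_levels₁ θ₂ θ₁ θ₃ (by linarith) h₁ h₃ h₂' h₁' h₃' (by linarith)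
    refine ⟨C, hC, fun s₁ s₂ s₃ l hs₁ hs₂ hs₃ hl N => ?_⟩
    have := hh s₂ s₁ s₃ l hs₂ hs₁ hs₃ hl N
    rw [mul_comm (s₁^θ₁)]
    refine le_trans (le_of_eq ?_) this
    exact Finset.sum_congr rfl fun m _ => by ring

lemma iterate (Ps : Finset Quartile) (a₁ a₂ a₃ : Quartile → ℂ) {E₁ E₂ E₃ s₁ s₂ s₃ l : ℝ}
    (hE₁ : 0 < E₁) (hE₂ : 0 < E₂) (hE₃ : 0 < E₃) (hl : 0 < l)
    (hs₁ : 0 < s₁) (hs₂ : 0 < s₂) (hs₃ : 0 < s₃)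
    (e₁ : energy Ps 1 a₁ ≤ E₁) (e₂ : energy Ps 2 a₂ ≤ E₂) (e₃ : energy Ps 3 a₃ ≤ E₃)
    (z₁ : size Ps 1 a₁ ≤ E₁ * s₁) (z₂ : size Ps 2 a₂ ≤ E₂ * s₂) (z₃ : size Ps 3 a₃ ≤ E₃ * s₃)
    (l₁ : s₁ ≤ l) (l₂ : s₂ ≤ l) (l₃ : s₃ ≤ l) (N : ℕ) :
    ∃ Q ⊆ Ps, size Q 1 a₁ ≤ E₁ * (l / 2^N) ∧ size Q 2 a₂ ≤ E₂ * (l / 2^N) ∧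
      size Q 3 a₃ ≤ E₃ * (l / 2^N) ∧
      ∑ P ∈ Ps, g a₁ a₂ a₃ P ≤ ∑ P ∈ Q, g a₁ a₂ a₃ P + 72 * (E₁ * E₂ * E₃) *
        ∑ m ∈ Finset.range N, ((l / 2^m)^2)⁻¹ *
        (min s₁ (l / 2^m) * min s₂ (l / 2^m) * min s₃ (l / 2^m)) := by
  induction N with
  | zero =>
    refine ⟨Ps, subset_rfl, ?_, ?_, ?_, by simp⟩
    · exact z₁.trans (by simp; nlinarith)
    · exact z₂.trans (by simp; nlinarith)
    · exact z₃.trans (by simp; nlinarith)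
  | succ N ih =>
    obtain ⟨Q, hQ, y1, y2, y3, hsum⟩ := ih
    have hlN : 0 < l / 2^N := by positivity
    obtain ⟨Q', hQ', x1, x2, x3, hs⟩ := level Q a₁ a₂ a₃ hE₁ hE₂ hE₃ hlN
      ((energy_mono _ _ hQ).trans e₁) ((energy_mono _ _ hQ).trans e₂) ((energy_mono _ _ hQ).trans e₃)
    have half : l / 2^(N+1) = l / 2^N / 2 := by rw [pow_succ]; field_simp
    refine ⟨Q', hQ'.trans hQ, ?_, ?_, ?_, ?_⟩
    · rw [half]; linarith
    · rw [half]; linarith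
    · rw [half]; linarith
    · have mm : ∀ (j : ℕ) (a : Quartile → ℂ) (E s : ℝ), 0 < E → size Ps j a ≤ E * s →
          size Q j a ≤ E * (l / 2^N) → size Q j a ≤ E * min s (l / 2^N) := by
        intro j a E s hE h1 h2
        rw [mul_min_of_nonneg _ _ hE.le]
        exact le_min ((size_mono _ _ hQ).trans h1) h2
      have w1 := mm 1 a₁ E₁ s₁ hE₁ z₁ y1
      have w2 := mm 2 a₂ E₂ s₂ hE₂ z₂ y2
      have w3 := mm 3 a₃ E₃ s₃ hE₃ z₃ y3
      have n1 := size_nonneg Q 1 a₁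
      have n2 := size_nonneg Q 2 a₂
      have n3 := size_nonneg Q 3 a₃
      have m1 : 0 < min s₁ (l / 2^N) := lt_min hs₁ hlN
      have m2 : 0 < min s₂ (l / 2^N) := lt_min hs₂ hlN
      have m3 : 0 < min s₃ (l / 2^N) := lt_min hs₃ hlN
      have prod : size Q 1 a₁ * size Q 2 a₂ * size Q 3 a₃ ≤
          (E₁ * min s₁ (l / 2^N)) * (E₂ * min s₂ (l / 2^N)) * (E₃ * min s₃ (l / 2^N)) := by
        gcongr
      have prod' : 72 * ((l / 2^N)^2)⁻¹ * (size Q 1 a₁ * size Q 2 a₂ * size Q 3 a₃) ≤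
          72 * ((l / 2^N)^2)⁻¹ * ((E₁ * min s₁ (l / 2^N)) * (E₂ * min s₂ (l / 2^N)) *
            (E₃ * min s₃ (l / 2^N))) := mul_le_mul_of_nonneg_left prod (by positivity)
      rw [Finset.sum_range_succ]
      linarith

lemma main_pos (Ps : Finset Quartile) (a₁ a₂ a₃ : Quartile → ℂ) {E₁ E₂ E₃ s₁ s₂ s₃ K : ℝ}
    (hE₁ : 0 < E₁) (hE₂ : 0 < E₂) (hE₃ : 0 < E₃)
    (hs₁ : 0 < s₁) (hs₂ : 0 < s₂) (hs₃ : 0 < s₃)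
    (e₁ : energy Ps 1 a₁ ≤ E₁) (e₂ : energy Ps 2 a₂ ≤ E₂) (e₃ : energy Ps 3 a₃ ≤ E₃)
    (z₁ : size Ps 1 a₁ ≤ E₁ * s₁) (z₂ : size Ps 2 a₂ ≤ E₂ * s₂) (z₃ : size Ps 3 a₃ ≤ E₃ * s₃)
    (hK : ∀ l : ℝ, 0 < l → ∀ N : ℕ, ∑ m ∈ Finset.range N, ((l / 2^m)^2)⁻¹ *
        (min s₁ (l / 2^m) * min s₂ (l / 2^m) * min s₃ (l / 2^m)) ≤ K) :
    ∑ P ∈ Ps, g a₁ a₂ a₃ P ≤ 72 * (E₁ * E₂ * E₃) * K := by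
  set l := s₁ + s₂ + s₃ with hldef
  have hl : 0 < l := by positivity
  have key : ∀ N : ℕ, ∑ P ∈ Ps, g a₁ a₂ a₃ P ≤ (∑ P ∈ Ps, P.len) *
      ((E₁ * (l / 2^N)) * (E₂ * (l / 2^N)) * (E₃ * (l / 2^N))) + 72 * (E₁ * E₂ * E₃) * K := by
    intro N
    obtain ⟨Q, hQ, y1, y2, y3, h⟩ := iterate Ps a₁ a₂ a₃ hE₁ hE₂ hE₃ hl hs₁ hs₂ hs₃ e₁ e₂ e₃
      z₁ z₂ z₃ (by linarith) (by linarith) (by linarith) N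
    refine h.trans (add_le_add ?_ (mul_le_mul_of_nonneg_left (hK l hl N) (by positivity)))
    have n1 := size_nonneg Q 1 a₁
    have n2 := size_nonneg Q 2 a₂
    have n3 := size_nonneg Q 3 a₃
    calc ∑ P ∈ Q, g a₁ a₂ a₃ P ≤ ∑ P ∈ Q, P.len *
          ((E₁ * (l / 2^N)) * (E₂ * (l / 2^N)) * (E₃ * (l / 2^N))) := by
          apply Finset.sum_le_sum
          intro P hP
          have := tree_est (Ps := Q) (T := {P}) (t := P) (q := 1) (by simp) (by simpa using hP)
            (by intro R hR; rw [Finset.mem_singleton] at hR; subst hR; exact Or.inr rfl) a₁ a₂ a₃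
          rw [Finset.sum_singleton] at this
          refine this.trans (mul_le_mul_of_nonneg_left ?_ (len_pos P).le)
          gcongr
      _ ≤ ∑ P ∈ Ps, P.len * ((E₁ * (l / 2^N)) * (E₂ * (l / 2^N)) * (E₃ * (l / 2^N))) := by
          apply Finset.sum_le_sum_of_subset_of_nonneg hQ
          intro P _ _
          have := len_pos P
          positivity
      _ = _ := by rw [Finset.sum_mul]
  have lim0 : Filter.Tendsto (fun N : ℕ => l / 2^N) Filter.atTop (nhds 0) :=
    tendsto_const_nhds.div_atTop (tendsto_pow_atTop_atTop_of_one_lt (by norm_num))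
  have lim : Filter.Tendsto (fun N : ℕ => (∑ P ∈ Ps, P.len) *
      ((E₁ * (l / 2^N)) * (E₂ * (l / 2^N)) * (E₃ * (l / 2^N))) + 72 * (E₁ * E₂ * E₃) * K)
      Filter.atTop (nhds ((∑ P ∈ Ps, P.len) * ((E₁ * 0) * (E₂ * 0) * (E₃ * 0)) +
        72 * (E₁ * E₂ * E₃) * K)) :=
    ((((lim0.const_mul E₁).mul (lim0.const_mul E₂)).mul (lim0.const_mul E₃)).const_mul _).add_const _
  have := ge_of_tendsto' lim key
  simpa using this

lemma zero_or_pos (Ps : Finset Quartile) (j : ℕ) (a : Quartile → ℂ) :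
    (∀ P ∈ Ps, a P = 0) ∨ (0 < size Ps j a ∧ 0 < energy Ps j a) := by
  by_cases h : ∀ P ∈ Ps, a P = 0
  · exact Or.inl h
  · right
    push Not at h
    obtain ⟨P, hP, hne⟩ := h
    have hn : 0 < ‖a P‖ := norm_pos_iff.2 hne
    constructor
    · have := size_single j a hP
      by_contra hcon
      have h0 : size Ps j a = 0 := le_antisymm (not_lt.1 hcon) (size_nonneg _ _ _)
      rw [h0, zero_mul] at this
      linarith
    · have := energy_le (Ps := Ps) (D := {P}) (j := j) a (by simpa using hP) (by
        intro R hR R' hR' hne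
        rw [Finset.mem_singleton] at hR hR'
        exact absurd (hR.trans hR'.symm) hne)
      rw [Finset.sum_singleton] at this
      by_contra hcon
      have h0 : energy Ps j a = 0 := le_antisymm (not_lt.1 hcon) (energy_nonneg _ _ _)
      rw [h0] at this
      have h2 : 0 < ‖a P‖^2 := by positivity
      norm_num at this
      exact hne this

lemma pow_split {S E θ : ℝ} (hS : 0 < S) (hE : 0 < E) :
    E * (S / E)^θ = S^θ * E^(1-θ) := by
  rw [Real.div_rpow hS.le hE.le, Real.rpow_sub hE, Real.rpow_one]
  have : E^θ ≠ 0 := (Real.rpow_pos_of_pos hE θ).ne'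
  field_simp

theorem main (θ₁ θ₂ θ₃ : ℝ)
    (h₁ : 0 ≤ θ₁) (h₂ : 0 ≤ θ₂) (h₃ : 0 ≤ θ₃)
    (h₁' : θ₁ < 1) (h₂' : θ₂ < 1) (h₃' : θ₃ < 1)
    (hsum : θ₁ + θ₂ + θ₃ = 1) :
    ∃ C : ℝ, 0 < C ∧ ∀ (Ps : Finset Quartile) (a₁ a₂ a₃ : Quartile → ℂ),
      ‖∑ P ∈ Ps, ((1 / Real.sqrt P.len : ℝ) : ℂ) * (a₁ P * a₂ P * a₃ P)‖ ≤
        C * ((size Ps 1 a₁ ^ θ₁ * energy Ps 1 a₁ ^ (1 - θ₁)) *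
             (size Ps 2 a₂ ^ θ₂ * energy Ps 2 a₂ ^ (1 - θ₂)) *
             (size Ps 3 a₃ ^ θ₃ * energy Ps 3 a₃ ^ (1 - θ₃))) := by
  obtain ⟨C, hC, hCs⟩ := sum_levels θ₁ θ₂ θ₃ h₁ h₂ h₃ h₁' h₂' h₃' hsum
  refine ⟨72 * C, by positivity, fun Ps a₁ a₂ a₃ => ?_⟩
  have S1 := size_nonneg Ps 1 a₁
  have S2 := size_nonneg Ps 2 a₂
  have S3 := size_nonneg Ps 3 a₃
  have E1 := energy_nonneg Ps 1 a₁
  have E2 := energy_nonneg Ps 2 a₂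
  have E3 := energy_nonneg Ps 3 a₃
  have triv : (∀ P ∈ Ps, a₁ P * a₂ P * a₃ P = 0) →
      ‖∑ P ∈ Ps, ((1 / Real.sqrt P.len : ℝ) : ℂ) * (a₁ P * a₂ P * a₃ P)‖ ≤
        72 * C * ((size Ps 1 a₁ ^ θ₁ * energy Ps 1 a₁ ^ (1 - θ₁)) *
             (size Ps 2 a₂ ^ θ₂ * energy Ps 2 a₂ ^ (1 - θ₂)) *
             (size Ps 3 a₃ ^ θ₃ * energy Ps 3 a₃ ^ (1 - θ₃))) := by
    intro h
    rw [Finset.sum_eq_zero (fun P hP => by rw [h P hP, mul_zero]), norm_zero]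
    positivity
  rcases zero_or_pos Ps 1 a₁ with h | ⟨p1, q1⟩
  · exact triv fun P hP => by simp [h P hP]
  rcases zero_or_pos Ps 2 a₂ with h | ⟨p2, q2⟩
  · exact triv fun P hP => by simp [h P hP]
  rcases zero_or_pos Ps 3 a₃ with h | ⟨p3, q3⟩
  · exact triv fun P hP => by simp [h P hP]
  clear triv
  have hm := main_pos Ps a₁ a₂ a₃ q1 q2 q3 (div_pos p1 q1) (div_pos p2 q2) (div_pos p3 q3)
    le_rfl le_rfl le_rfl (mul_div_cancel₀ _ q1.ne').ge (mul_div_cancel₀ _ q2.ne').ge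
    (mul_div_cancel₀ _ q3.ne').ge
    (fun l hl N => hCs _ _ _ l (div_pos p1 q1) (div_pos p2 q2) (div_pos p3 q3) hl N)
  calc _ ≤ ∑ P ∈ Ps, g a₁ a₂ a₃ P := by
        refine (norm_sum_le _ _).trans (Finset.sum_le_sum fun P _ => le_of_eq ?_)
        unfold g
        rw [norm_mul, norm_mul, norm_mul, Complex.norm_real, Real.norm_of_nonneg (by positivity)]
    _ ≤ _ := hm
    _ = _ := by
        rw [← pow_split p1 q1, ← pow_split p2 q2, ← pow_split p3 q3]
        ring

end SE

/-- the abstract trilinear size-energy estimate. -/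
theorem trilinear_size_energy (θ₁ θ₂ θ₃ : ℝ)
    (h₁ : 0 ≤ θ₁) (h₂ : 0 ≤ θ₂) (h₃ : 0 ≤ θ₃)
    (h₁' : θ₁ < 1) (h₂' : θ₂ < 1) (h₃' : θ₃ < 1)
    (hsum : θ₁ + θ₂ + θ₃ = 1) :
    ∃ C : ℝ, 0 < C ∧ ∀ (Ps : Finset Quartile) (a₁ a₂ a₃ : Quartile → ℂ),
      ‖∑ P ∈ Ps, ((1 / Real.sqrt P.len : ℝ) : ℂ) * (a₁ P * a₂ P * a₃ P)‖ ≤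
        C * ((size Ps 1 a₁ ^ θ₁ * energy Ps 1 a₁ ^ (1 - θ₁)) *
             (size Ps 2 a₂ ^ θ₂ * energy Ps 2 a₂ ^ (1 - θ₂)) *
             (size Ps 3 a₃ ^ θ₃ * energy Ps 3 a₃ ^ (1 - θ₃))) := by
  exact SE.main θ₁ θ₂ θ₃ h₁ h₂ h₃ h₁' h₂' h₃' hsum
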